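/- For every ε > 0 there exists a constant C > 0 such that for all nonzero integers m and n and all real X ≥ 2, Σ_{1 ≤ c ≤ X} |S(m,n,c,χ)|/c ≤ C · X^{1/2} · (log X) · |mn|^{ε}, where the sum runs over integers c with 1 ≤ c ≤ X. -/

import Mathlib

open Finset

/-- `e(x) = exp(2πix)`. -/
noncomputable def eFun (x : ℝ) : ℂ := Complex.exp (2 * (Real.pi : ℂ) * Complex.I * (x : ℂ))

/-- The Dedekind sum `s(d,c)`. -/
noncomputable def dedekindS (d : ℤ) (c : ℕ) : ℝ :=
  ∑ r ∈ Finset.Icc 1 (c - 1),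
    ((r : ℝ) / c) * ((d : ℝ) * r / c - ⌊(d : ℝ) * r / c⌋ - 1 / 2)

/-- The Kloosterman sum `S(m,n,c,χ)` with the eta multiplier. -/
noncomputable def klooS (m n : ℤ) (c : ℕ) : ℂ :=
  Complex.exp ((Real.pi : ℂ) * Complex.I / 4) *
    ∑ d ∈ (Finset.Icc 1 c).filter fun d => Nat.gcd d c = 1,
      Complex.exp ((Real.pi : ℂ) * Complex.I * (dedekindS (d : ℤ) c)) *
        eFun ((((m : ℝ) - 1) * (((d : ZMod c)⁻¹).val : ℝ) + ((n : ℝ) - 1) * (d : ℝ)) / c)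

/-!
The Dedekind sum satisfies a congruence for `12 c s(d, c)` modulo `24 c` involving a Jacobi symbol,
which makes `e ^ (π i s(d, c))` explicit and lets the Kloosterman sum factor when `c = a b` with `b`
coprime to `6 a`: the factor at `b` is a Salié sum. If moreover `b` is coprime to
`(24 m - 23) (24 n - 23)`, quadratic Gauss sums evaluate the Salié sum as `√b` times a sum of phases
over the square roots of a unit modulo `b`, of which there are at most `τ(b)`.

Take `Q = 6 |24 m - 23| |24 n - 23|` and let `a` be the part of `c` supported on the primes of `Q`.
The factor at `a` is bounded trivially, so `|S(m, n, c, χ)| / c ≤ τ(b) / √b`. Averaging over `c`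
gives `√X log X` times the Euler product `∏ (1 - p ^ (-1/2))⁻¹` over `p ∣ Q`, which is at most
`4 ^ ω(Q) ≪ |m n| ^ ε`.
-/

open scoped NumberTheorySymbols

section DedekindSum

theorem two_mul_sum_range_cast (R : Type*) [CommRing R] (n : ℕ) :
    2 * ∑ r ∈ range n, (r : R) = n * (n - 1) := by
  induction n with
  | zero => simp
  | succ n ih => rw [sum_range_succ, mul_add, ih]; push_cast; ring

theorem six_mul_sum_range_cast_sq (R : Type*) [CommRing R] (n : ℕ) :
    6 * ∑ r ∈ range n, (r : R) ^ 2 = n * (n - 1) * (2 * n - 1) := by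
  induction n with
  | zero => simp
  | succ n ih => rw [sum_range_succ, mul_add, ih]; push_cast; ring

/-- The integer `12 c s(d, c)`, in the form obtained by expanding the sawtooth in `s(d, c)`. -/
def dedekindInt (d : ℤ) (c : ℕ) : ℤ :=
  2 * d * (c - 1) * (2 * c - 1) - 12 * ∑ r ∈ range c, (r : ℤ) * (d * r / c) - 3 * c * (c - 1)

theorem dedekindS_eq_sum_range (d : ℤ) (c : ℕ) :
    dedekindS d c =
      ∑ r ∈ range c, ((r : ℝ) / c) * ((d : ℝ) * r / c - (d * r / c : ℤ) - 1 / 2) := by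
  have floor_eq (r : ℕ) : ⌊(d : ℝ) * r / c⌋ = d * r / (c : ℤ) := by
    rw [← Int.cast_natCast r, ← Int.cast_mul, Int.floor_div_natCast, Int.floor_intCast]
  simp only [dedekindS, floor_eq]
  refine sum_subset (fun r hr ↦ ?_) fun r hr hr' ↦ ?_
  · simp only [mem_Icc, mem_range] at hr ⊢
    lia
  · obtain rfl : r = 0 := by simp only [mem_Icc, mem_range] at hr hr'; lia
    simp

theorem twelve_mul_dedekindS (d : ℤ) {c : ℕ} (hc : c ≠ 0) :
    12 * c * dedekindS d c = dedekindInt d c := by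
  have hc' : (c : ℝ) ≠ 0 := mod_cast hc
  have expand (r : ℕ) : ((r : ℝ) / c) * ((d : ℝ) * r / c - (d * r / c : ℤ) - 1 / 2) =
      d / c ^ 2 * (r : ℝ) ^ 2 - 1 / c * (r * (d * r / c : ℤ)) - 1 / (2 * c) * r := by
    field_simp
  simp only [dedekindS_eq_sum_range, expand, sum_sub_distrib, ← mul_sum, dedekindInt]
  push_cast
  field_simp
  linear_combination 4 * d * six_mul_sum_range_cast_sq ℝ c - 6 * c * two_mul_sum_range_cast ℝ c

theorem dedekindInt_congr {d e : ℤ} {c : ℕ} (h : d ≡ e [ZMOD c]) :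
    dedekindInt d c = dedekindInt e c := by
  rcases eq_or_ne c 0 with rfl | hc
  · rw [Nat.cast_zero, Int.modEq_zero_iff] at h
    rw [h]
  obtain ⟨k, hk⟩ := h.dvd
  obtain rfl : e = d + c * k := by linarith
  have shift (r : ℕ) : (r : ℤ) * ((d + c * k) * r / c) = r * (d * r / c) + k * (r : ℤ) ^ 2 := by
    rw [show (d + c * k) * r = d * r + c * (k * r) by ring,
      Int.add_mul_ediv_left _ _ (mod_cast hc)]
    ring
  simp only [dedekindInt, shift, sum_add_distrib, ← mul_sum]
  linear_combination 2 * k * six_mul_sum_range_cast_sq ℤ c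

theorem dedekindInt_neg {d : ℤ} {c : ℕ} (h : IsCoprime d c) :
    dedekindInt (-d) c = -dedekindInt d c := by
  have floor_neg : ∀ r ∈ range c, (r : ℤ) * (-d * r / c) = -(r * (d * r / c)) - r := by
    intro r hr
    rcases eq_or_ne r 0 with rfl | hr0
    · simp
    have hnd : ¬(c : ℤ) ∣ d * r := fun hdvd ↦
      hr0 <| Nat.eq_zero_of_dvd_of_lt (mod_cast h.symm.dvd_of_dvd_mul_left hdvd) (mem_range.1 hr)
    have hc : (c : ℤ).sign = 1 := Int.sign_eq_one_of_pos (by have := mem_range.1 hr; lia)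
    rw [neg_mul, Int.neg_ediv, if_neg hnd, hc]
    ring
  rw [dedekindInt, dedekindInt, sum_congr rfl floor_neg, sum_sub_distrib, sum_neg_distrib]
  linear_combination 6 * two_mul_sum_range_cast ℤ c

theorem sum_range_mul_mod {M : Type*} [AddCommMonoid M] {c d : ℕ} (h : d.Coprime c)
    (f : ℕ → M) : ∑ r ∈ range c, f (d * r % c) = ∑ r ∈ range c, f r := by
  have maps : Set.MapsTo (fun r ↦ d * r % c) (range c) (range c) := fun r hr ↦ by
    simpa using Nat.mod_lt _ (Nat.zero_lt_of_lt (mem_range.1 hr))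
  have inj : Set.InjOn (fun r ↦ d * r % c) (range c) := fun a ha b hb hab ↦
    (Nat.ModEq.cancel_left_of_coprime h.symm hab).eq_of_lt_of_lt
      (by simpa using ha) (by simpa using hb)
  exact sum_nbij _ maps inj (surjOn_of_injOn_of_card_le _ maps inj le_rfl) fun _ _ ↦ rfl

theorem two_mul_sum_ite_mul_le {c d r : ℕ} (hr : r < c) (hd : 0 < d) :
    2 * ∑ s ∈ range d, (if s * c ≤ d * r then (s : ℤ) else 0) =
      ((d * r / c : ℕ) : ℤ) ^ 2 + (d * r / c : ℕ) := by
  have hc : 0 < c := by lia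
  have hlt : d * r / c < d :=
    (Nat.div_lt_iff_lt_mul hc).2 (Nat.mul_lt_mul_of_pos_left hr hd)
  have filter_eq : {s ∈ range d | s * c ≤ d * r} = range (d * r / c + 1) := by
    ext s
    simp only [mem_filter, mem_range, ← Nat.le_div_iff_mul_le hc]
    lia
  rw [← sum_filter, filter_eq, two_mul_sum_range_cast]
  push_cast
  ring

theorem sum_ite_mul_le {c d s : ℕ} (h : d.Coprime c) (hs : s < d) (hs0 : s ≠ 0) (hc : 0 < c) :
    ∑ r ∈ range c, (if s * c ≤ d * r then (1 : ℤ) else 0) = c - 1 - (c * s / d : ℕ) := by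
  have hd : 0 < d := by lia
  have hlt : c * s / d < c :=
    (Nat.div_lt_iff_lt_mul hd).2 (Nat.mul_lt_mul_of_pos_left hs hc)
  have hne (r : ℕ) : s * c ≠ d * r := fun he ↦
    hs0 <| Nat.eq_zero_of_dvd_of_lt (h.dvd_of_dvd_mul_right ⟨r, he⟩) hs
  have filter_eq : {r ∈ range c | s * c ≤ d * r} = Ico (c * s / d + 1) c := by
    ext r
    rw [mem_filter, mem_range, mem_Ico, Nat.succ_le_iff, Nat.div_lt_iff_lt_mul hd, mul_comm c s,
      mul_comm r d, (hne r).le_iff_lt, and_comm]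
  rw [sum_boole, filter_eq, Nat.card_Ico, Nat.cast_sub hlt]
  push_cast
  ring

theorem sum_sq_add_floor {c d : ℕ} (h : d.Coprime c) (hc : 0 < c) (hd : 0 < d) :
    ∑ r ∈ range c, (((d * r / c : ℕ) : ℤ) ^ 2 + (d * r / c : ℕ)) =
      (c - 1) * (d * (d - 1)) - 2 * ∑ s ∈ range d, (s : ℤ) * (c * s / d : ℕ) := by
  have row : ∀ s ∈ range d, ∑ r ∈ range c, (if s * c ≤ d * r then (s : ℤ) else 0) =
      (c - 1) * s - s * (c * s / d : ℕ) := by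
    intro s hs
    rcases eq_or_ne s 0 with rfl | hs0
    · simp
    have := sum_ite_mul_le h (mem_range.1 hs) hs0 hc
    calc ∑ r ∈ range c, (if s * c ≤ d * r then (s : ℤ) else 0)
        = s * ∑ r ∈ range c, (if s * c ≤ d * r then (1 : ℤ) else 0) := by
          simp only [mul_sum, mul_ite, mul_one, mul_zero]
      _ = (c - 1) * s - s * (c * s / d : ℕ) := by rw [this]; ring
  rw [← sum_congr rfl fun r hr ↦ two_mul_sum_ite_mul_le (mem_range.1 hr) hd, ← mul_sum, sum_comm,
    sum_congr rfl row, sum_sub_distrib, ← mul_sum]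
  linear_combination (c - 1 : ℤ) * two_mul_sum_range_cast ℤ d

theorem dedekindInt_reciprocity {c d : ℕ} (h : d.Coprime c) (hc : 0 < c) (hd : 0 < d) :
    (d : ℤ) * dedekindInt d c + c * dedekindInt c d = d ^ 2 + c ^ 2 + 1 - 3 * d * c := by
  have mod_eq (r : ℕ) : ((d * r % c : ℕ) : ℤ) = d * r - c * (d * r / c : ℕ) := by
    push_cast
    linarith [Int.emod_add_mul_ediv ((d : ℤ) * r) c]
  have first_moment := sum_range_mul_mod h fun r ↦ (r : ℤ)
  have second_moment := sum_range_mul_mod h fun r ↦ (r : ℤ) ^ 2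
  have sq_expand (r : ℕ) : ((d * r : ℤ) - c * (d * r / c : ℕ)) ^ 2 =
      d ^ 2 * (r : ℤ) ^ 2 - 2 * d * c * (r * (d * r / c : ℕ)) +
        c ^ 2 * ((d * r / c : ℕ) : ℤ) ^ 2 := by ring
  simp only [mod_eq, sq_expand, sum_add_distrib, sum_sub_distrib, ← mul_sum]
    at first_moment second_moment
  have swap := sum_sq_add_floor h hc hd
  rw [sum_add_distrib] at swap
  have hc' : (c : ℤ) ≠ 0 := mod_cast hc.ne'
  apply mul_left_cancel₀ hc'
  simp only [dedekindInt, ← Nat.cast_mul, ← Int.natCast_div]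
  push_cast at *
  linear_combination 6 * second_moment - 6 * c ^ 2 * swap - 6 * c * first_moment +
    (1 - d ^ 2 : ℤ) * six_mul_sum_range_cast_sq ℤ c +
    (3 * c * (d - 1) : ℤ) * two_mul_sum_range_cast ℤ c

theorem three_dvd_dedekindInt (d : ℤ) {c : ℕ} (hc : ¬3 ∣ c) : (3 : ℤ) ∣ dedekindInt d c := by
  have hmod : (c : ℤ) % 3 = 1 ∨ (c : ℤ) % 3 = 2 := by lia
  have hprod : (3 : ℤ) ∣ (c - 1) * (2 * c - 1) := by
    rcases hmod with h | h
    · exact Dvd.dvd.mul_right (by lia) _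
    · exact Dvd.dvd.mul_left (by lia) _
  rw [dedekindInt, mul_assoc (2 * d)]
  exact dvd_sub (dvd_sub (hprod.mul_left _) ⟨4 * _, by ring⟩) ⟨c * (c - 1), by ring⟩

end DedekindSum

section DedekindSumCongruence

theorem natCast_sq_zmod_eight {n : ℕ} (hn : Odd n) : (n : ZMod 8) ^ 2 = 1 := by
  obtain ⟨k, rfl⟩ := hn
  push_cast
  generalize (k : ZMod 8) = k
  revert k
  decide

theorem two_mul_natCast_zmod_eight_of_one {n : ℕ} (hn : n % 4 = 1) : 2 * (n : ZMod 8) = 2 := by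
  rw [← Nat.cast_two, ← Nat.cast_mul, ZMod.natCast_eq_natCast_iff']
  lia

theorem two_mul_natCast_zmod_eight_of_three {n : ℕ} (hn : n % 4 = 3) :
    2 * (n : ZMod 8) = -2 := by
  have h : ((2 * n : ℕ) : ZMod 8) = (6 : ℕ) := by rw [ZMod.natCast_eq_natCast_iff']; lia
  rw [← Nat.cast_two, ← Nat.cast_mul, h]
  rfl

theorem jacobiSym_eq_one_or_neg_one {a : ℤ} {b : ℕ} (h : IsCoprime a b) :
    J(a | b) = 1 ∨ J(a | b) = -1 :=
  jacobiSym.eq_one_or_neg_one (Int.isCoprime_iff_gcd_eq_one.1 h)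

theorem dedekindInt_zmod_eight_neg {d : ℤ} {c : ℕ} (hc : Odd c) (h : IsCoprime d c)
    (hd : (dedekindInt d c : ZMod 8) = c + 1 - 2 * J(d | c)) :
    (dedekindInt (-d) c : ZMod 8) = c + 1 - 2 * J(-d | c) := by
  have eight : (8 : ZMod 8) = 0 := rfl
  rw [dedekindInt_neg h, Int.cast_neg, hd, jacobiSym.neg d hc]
  rcases Nat.odd_mod_four_iff.1 (Nat.odd_iff.1 hc) with h1 | h3
  · rw [ZMod.χ₄_nat_one_mod_four h1]
    have two_mul := two_mul_natCast_zmod_eight_of_one h1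
    rcases jacobiSym_eq_one_or_neg_one h with hJ | hJ <;> rw [hJ] <;> push_cast
    · linear_combination -two_mul
    · linear_combination -two_mul - eight
  · rw [ZMod.χ₄_nat_three_mod_four h3]
    linear_combination (norm := (push_cast; ring)) -two_mul_natCast_zmod_eight_of_three h3

theorem dedekindInt_zmod_eight_of_swap {c d : ℕ} (hc : Odd c) (hd : Odd d) (h : d.Coprime c)
    (hswap : (dedekindInt c d : ZMod 8) = d + 1 - 2 * J(c | d)) :
    (dedekindInt d c : ZMod 8) = c + 1 - 2 * J(d | c) := by
  have reciprocity := congrArg (Int.cast : ℤ → ZMod 8) (dedekindInt_reciprocity h hc.pos hd.pos)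
  push_cast at reciprocity
  rw [hswap] at reciprocity
  have hc2 := natCast_sq_zmod_eight hc
  have hd2 := natCast_sq_zmod_eight hd
  have solve : (dedekindInt d c : ZMod 8) =
      d * (d ^ 2 + c ^ 2 + 1 - 3 * d * c - c * (d + 1 - 2 * J(c | d))) := by
    linear_combination d * reciprocity - (dedekindInt d c : ZMod 8) * hd2
  have hJ : (J(c | d) : ZMod 8) ^ 2 = 1 := by
    rcases jacobiSym_eq_one_or_neg_one (Nat.isCoprime_iff_coprime.2 h.symm) with hJ | hJ <;>
      simp [hJ]
  have same : ∀ c d e : ZMod 8, c ^ 2 = 1 → d ^ 2 = 1 → e ^ 2 = 1 → 2 * c = 2 ∨ 2 * d = 2 →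
      d * (d ^ 2 + c ^ 2 + 1 - 3 * d * c - c * (d + 1 - 2 * e)) = c + 1 - 2 * e := by decide
  have opposite : ∀ c d e : ZMod 8, c ^ 2 = 1 → d ^ 2 = 1 → e ^ 2 = 1 → 2 * c = -2 → 2 * d = -2 →
      d * (d ^ 2 + c ^ 2 + 1 - 3 * d * c - c * (d + 1 - 2 * e)) = c + 1 - 2 * -e := by decide
  rw [solve]
  rcases Nat.odd_mod_four_iff.1 (Nat.odd_iff.1 hc) with hc1 | hc3
  · rw [jacobiSym.quadratic_reciprocity_one_mod_four' hd hc1]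
    exact same _ _ _ hc2 hd2 hJ (.inl (two_mul_natCast_zmod_eight_of_one hc1))
  rcases Nat.odd_mod_four_iff.1 (Nat.odd_iff.1 hd) with hd1 | hd3
  · rw [jacobiSym.quadratic_reciprocity_one_mod_four hd1 hc]
    exact same _ _ _ hc2 hd2 hJ (.inr (two_mul_natCast_zmod_eight_of_one hd1))
  · rw [jacobiSym.quadratic_reciprocity_three_mod_four hd3 hc3, Int.cast_neg]
    exact opposite _ _ _ hc2 hd2 hJ (two_mul_natCast_zmod_eight_of_three hc3)
      (two_mul_natCast_zmod_eight_of_three hd3)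

theorem exists_odd_lt_modEq_or_modEq_neg {c : ℕ} (hc : Odd c) {d : ℤ} (hd : ¬(c : ℤ) ∣ d) :
    ∃ e : ℕ, Odd e ∧ e < c ∧ (d ≡ e [ZMOD c] ∨ d ≡ -e [ZMOD c]) := by
  have hc0 : (0 : ℤ) < c := mod_cast hc.pos
  have hpos : d % c ≠ 0 := fun h ↦ hd (Int.dvd_of_emod_eq_zero h)
  obtain ⟨r, hr⟩ := Int.eq_ofNat_of_zero_le (Int.emod_nonneg d hc0.ne')
  have hlt : r < c := by have := Int.emod_lt_of_pos d hc0; lia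
  have modEq : d ≡ r [ZMOD c] := by simpa [Int.ModEq, hr] using (Int.emod_emod d c).symm
  rcases r.even_or_odd with heven | hodd
  · refine ⟨c - r, Nat.Odd.sub_even hlt.le hc heven, by lia, .inr (modEq.trans ?_)⟩
    rw [Nat.cast_sub hlt.le]
    exact Int.modEq_iff_dvd.2 ⟨-1, by ring⟩
  · exact ⟨r, hodd, hlt, .inl modEq⟩

theorem isCoprime_congr {a b n : ℤ} (h : a ≡ b [ZMOD n]) : IsCoprime a n ↔ IsCoprime b n := by
  obtain ⟨k, hk⟩ := h.dvd
  obtain rfl : b = a + n * k := by linarith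
  exact IsCoprime.add_mul_left_left_iff.symm

theorem dedekindInt_zmod_eight {c : ℕ} (hc : Odd c) {d : ℤ} (h : IsCoprime d c) :
    (dedekindInt d c : ZMod 8) = c + 1 - 2 * J(d | c) := by
  induction c using Nat.strong_induction_on generalizing d with
  | _ c ih =>
    rcases eq_or_ne c 1 with rfl | hc1
    · have dedekindInt_one : dedekindInt d 1 = 0 := by simp [dedekindInt]
      rw [dedekindInt_one, jacobiSym.one_right]
      norm_num
    have hnd : ¬(c : ℤ) ∣ d := fun hdvd ↦ hc1 <| by
      simpa [Int.isUnit_iff_natAbs_eq] using h.symm.isUnit_of_dvd' dvd_rfl hdvd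
    obtain ⟨e, he, hlt, hmod⟩ := exists_odd_lt_modEq_or_modEq_neg hc hnd
    have of_coprime (hec : IsCoprime (e : ℤ) c) :
        (dedekindInt e c : ZMod 8) = c + 1 - 2 * J(e | c) :=
      dedekindInt_zmod_eight_of_swap hc he (Nat.isCoprime_iff_coprime.1 hec) (ih e hlt he hec.symm)
    rcases hmod with hmod | hmod
    · rw [dedekindInt_congr hmod, jacobiSym.mod_left' hmod]
      exact of_coprime ((isCoprime_congr hmod).1 h)
    · have hec : IsCoprime (e : ℤ) c := (IsCoprime.neg_left_iff _ _).1 ((isCoprime_congr hmod).1 h)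
      rw [dedekindInt_congr hmod, jacobiSym.mod_left' hmod]
      exact dedekindInt_zmod_eight_neg hc hec (of_coprime hec)

theorem dedekindInt_swap_modEq {c d : ℕ} (h : d.Coprime (6 * c)) :
    dedekindInt c d ≡ 9 * (d + 1) + 6 * J(c | d) [ZMOD 24] := by
  have hd6 : d.Coprime 6 := h.coprime_mul_right_right
  have hd : Odd d := (hd6.coprime_dvd_right (by decide : 2 ∣ 6)).odd_of_right
  have hd3 : ¬3 ∣ d := fun hdvd ↦ by
    simpa using (hd6.coprime_dvd_right (by decide : 3 ∣ 6)).symm.eq_one_of_dvd hdvd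
  have mod_three := three_dvd_dedekindInt c hd3
  have mod_eight : dedekindInt c d ≡ d + 1 - 2 * J(c | d) [ZMOD 8] := by
    refine (ZMod.intCast_eq_intCast_iff _ _ 8).1 ?_
    push_cast
    exact dedekindInt_zmod_eight hd (Nat.isCoprime_iff_coprime.2 h.coprime_mul_left_right.symm)
  rw [Int.ModEq] at mod_eight ⊢
  lia

theorem dedekindInt_modEq {c d d' : ℕ} (hc : 0 < c) (h : d.Coprime (6 * c))
    (hd' : (d * d' : ℤ) ≡ 1 [ZMOD 24 * c]) :
    dedekindInt d c ≡ d + d' + c * ((c + 9) * d' + 6 * (1 + J(c | d))) [ZMOD 24 * c] := by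
  have hdc : d.Coprime c := h.coprime_mul_left_right
  have hodd : Odd d :=
    ((h.coprime_mul_right_right).coprime_dvd_right (by decide : 2 ∣ 6)).odd_of_right
  have hodd' : Odd (d' : ℤ) := by
    have := (hd'.of_dvd (⟨12 * c, by ring⟩ : (2 : ℤ) ∣ 24 * c))
    exact (Int.odd_mul.1 (Int.odd_iff.2 this)).2
  have hJ : Odd J(c | d) := by
    rcases jacobiSym_eq_one_or_neg_one (Nat.isCoprime_iff_coprime.2 hdc.symm) with hJ | hJ <;>
      rw [hJ] <;> decide
  have reciprocity := dedekindInt_reciprocity hdc hc hodd.pos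
  obtain ⟨k, hk⟩ := (dedekindInt_swap_modEq h).dvd
  obtain ⟨l, hl⟩ := hd'.dvd
  obtain ⟨j, hj⟩ := hodd'
  obtain ⟨i, hi⟩ := hJ
  refine Int.modEq_iff_dvd.2 ⟨l * d - d' * k - l * dedekindInt d c - 12 * c * l +
    (j + 1) * (i + 2), ?_⟩
  linear_combination -d' * reciprocity - c * d' * hk + (d - 12 * c - dedekindInt d c) * hl +
    6 * c * (3 + J(c | d)) * hj + 6 * c * (2 * j + 2) * hi

end DedekindSumCongruence

section QuadraticGaussSum

variable {R : Type*} [CommRing R] [Fintype R] {ψ : AddChar R ℂ}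

/-- The quadratic Gauss sum of the additive character `ψ` twisted by `x`. -/
noncomputable def quadGaussSum (ψ : AddChar R ℂ) (x : R) : ℂ := ∑ y, ψ (x * y ^ 2)

theorem norm_quadGaussSum (hψ : ψ.IsPrimitive) {x : R} (hx : IsUnit (2 * x)) :
    ‖quadGaussSum ψ x‖ = √(Fintype.card R) := by
  classical
  have diagonal (k : R) : ∑ z, ψ (x * (k + z) ^ 2) * ψ (-(x * z ^ 2)) =
      if k = 0 then (Fintype.card R : ℂ) else 0 := by
    have term (z : R) : ψ (x * (k + z) ^ 2) * ψ (-(x * z ^ 2)) =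
        ψ (x * k ^ 2) * ψ (z * (2 * x * k)) := by
      rw [← AddChar.map_add_eq_mul, ← AddChar.map_add_eq_mul]
      congr 1
      ring
    simp only [term, ← mul_sum, AddChar.sum_mulShift _ hψ, hx.mul_right_eq_zero]
    split_ifs with hk <;> simp [hk]
  have mul_conj : quadGaussSum ψ x * (starRingEnd ℂ) (quadGaussSum ψ x) = Fintype.card R := by
    simp only [quadGaussSum, map_sum, ← AddChar.map_neg_eq_conj, sum_mul_sum]
    calc ∑ y, ∑ z, ψ (x * y ^ 2) * ψ (-(x * z ^ 2))
        = ∑ z, ∑ k, ψ (x * (k + z) ^ 2) * ψ (-(x * z ^ 2)) := by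
          rw [sum_comm]
          exact sum_congr rfl fun z _ ↦ (Equiv.sum_comp (Equiv.addRight z)
            fun y ↦ ψ (x * y ^ 2) * ψ (-(x * z ^ 2))).symm
      _ = Fintype.card R := by rw [sum_comm]; simp [diagonal]
  rw [Complex.mul_conj, Complex.normSq_eq_norm_sq] at mul_conj
  rw [← Real.sqrt_sq (norm_nonneg _)]
  exact congrArg Real.sqrt (mod_cast mul_conj)

theorem sum_comp_sq {F M : Type*} [Field F] [Fintype F] [DecidableEq F] [CommRing M]
    (hF : ringChar F ≠ 2) (f : F → M) :
    ∑ y, f (y ^ 2) = ∑ z, ((quadraticChar F z : M) + 1) * f z := by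
  rw [← sum_fiberwise univ fun y : F ↦ y ^ 2]
  refine sum_congr rfl fun z _ ↦ ?_
  have card_fiber : (#{y : F | y ^ 2 = z} : M) = quadraticChar F z + 1 := by
    have := congrArg (Int.cast : ℤ → M) (quadraticChar_card_sqrts hF z)
    simpa [Set.toFinset_ofPred] using this
  rw [sum_congr rfl fun y hy ↦ by rw [(mem_filter.1 hy).2], sum_const, nsmul_eq_mul, card_fiber]

theorem quadGaussSum_eq_gaussSum {F : Type*} [Field F] [Fintype F] [DecidableEq F]
    (hF : ringChar F ≠ 2) {ψ : AddChar F ℂ} (hψ : ψ.IsPrimitive) {x : F} (hx : x ≠ 0) :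
    quadGaussSum ψ x =
      gaussSum ((quadraticChar F).ringHomComp (Int.castRingHom ℂ)) (ψ.mulShift x) := by
  have orthogonality := AddChar.sum_mulShift x hψ
  rw [if_neg hx, Nat.cast_zero] at orthogonality
  simp only [quadGaussSum, sum_comp_sq hF fun z ↦ ψ (x * z), add_mul, one_mul, sum_add_distrib,
    gaussSum, AddChar.mulShift_apply, MulChar.ringHomComp_apply, eq_intCast]
  simp only [mul_comm x, orthogonality, add_zero]

theorem quadGaussSum_eq_quadraticChar_mul {F : Type*} [Field F] [Fintype F] [DecidableEq F]
    (hF : ringChar F ≠ 2) {ψ : AddChar F ℂ} (hψ : ψ.IsPrimitive) {x : F} (hx : x ≠ 0) :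
    quadGaussSum ψ x = quadraticChar F x * quadGaussSum ψ 1 := by
  have shift := gaussSum_mulShift ((quadraticChar F).ringHomComp (Int.castRingHom ℂ)) ψ
    (Units.mk0 x hx)
  have sq_one : (quadraticChar F x : ℂ) ^ 2 = 1 := mod_cast quadraticChar_sq_one hx
  rw [quadGaussSum_eq_gaussSum hF hψ hx, quadGaussSum_eq_gaussSum hF hψ one_ne_zero,
    AddChar.mulShift_one, ← shift, Units.val_mk0, MulChar.ringHomComp_apply, eq_intCast,
    ← mul_assoc, ← sq, sq_one, one_mul]

end QuadraticGaussSum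

section QuadraticGaussSumZMod

theorem eFun_intCast_div (q : ℕ) [NeZero q] (k : ℤ) :
    eFun (k / q) = ZMod.stdAddChar (k : ZMod q) := by
  rw [eFun, ZMod.stdAddChar_coe]
  push_cast
  congr 1
  ring

theorem stdAddChar_mul_intCast {a b q : ℕ} [NeZero b] [NeZero q] (hq : a * b = q) (k : ℤ) :
    ZMod.stdAddChar ((a * k : ℤ) : ZMod q) = ZMod.stdAddChar (k : ZMod b) := by
  subst hq
  rw [ZMod.stdAddChar_coe, ZMod.stdAddChar_coe]
  have ha : (a : ℂ) ≠ 0 := Nat.cast_ne_zero.2 (left_ne_zero_of_mul (NeZero.ne (a * b)))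
  push_cast
  congr 1
  field_simp

theorem stdAddChar_intCast_split {a b q : ℕ} [NeZero a] [NeZero b] [NeZero q]
    (hq : a * b = q) {u v : ℤ} (huv : u * a + v * b = 1) (k : ℤ) :
    ZMod.stdAddChar (k : ZMod q) =
      ZMod.stdAddChar ((v * k : ℤ) : ZMod a) * ZMod.stdAddChar ((u * k : ℤ) : ZMod b) := by
  subst hq
  have ha : (a : ℂ) ≠ 0 := NeZero.ne _
  have hb : (b : ℂ) ≠ 0 := NeZero.ne _
  have huv : (u : ℂ) * a + v * b = 1 := mod_cast huv
  rw [ZMod.stdAddChar_coe, ZMod.stdAddChar_coe, ZMod.stdAddChar_coe, ← Complex.exp_add]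
  push_cast
  congr 1
  field_simp
  linear_combination -k * huv

theorem sum_zmod_eq_sum_range {M : Type*} [AddCommMonoid M] {q : ℕ} [NeZero q] (f : ZMod q → M) :
    ∑ y, f y = ∑ y ∈ range q, f y :=
  sum_nbij' ZMod.val (fun y ↦ (y : ZMod q)) (fun y _ ↦ mem_range.2 (ZMod.val_lt y))
    (fun _ _ ↦ mem_univ _) (fun y _ ↦ ZMod.natCast_zmod_val y)
    (fun _ hy ↦ ZMod.val_cast_of_lt (mem_range.1 hy)) fun y _ ↦ by rw [ZMod.natCast_zmod_val]

theorem sum_range_mul {M : Type*} [AddCommMonoid M] (a b : ℕ) (f : ℕ → M) :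
    ∑ y ∈ range (a * b), f y = ∑ i ∈ range a, ∑ j ∈ range b, f (j + b * i) := by
  induction a with
  | zero => simp
  | succ a ih =>
    rw [Nat.succ_mul, sum_range_add, ih, sum_range_succ]
    simp only [add_comm, mul_comm]

theorem sum_range_ite_dvd {M : Type*} [AddCommMonoid M] {p : ℕ} (hp : p ≠ 0) (q : ℕ)
    (f : ℕ → M) :
    ∑ y ∈ range (p * q), (if p ∣ y then f y else 0) = ∑ i ∈ range q, f (p * i) := by
  rw [mul_comm, sum_range_mul]
  refine sum_congr rfl fun i _ ↦ ?_
  simp only [Nat.dvd_add_left (dvd_mul_right p i)]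
  rw [sum_eq_single_of_mem 0 (mem_range.2 (Nat.pos_of_ne_zero hp)) fun j hj hj0 ↦
    if_neg fun h ↦ hj0 (Nat.eq_zero_of_dvd_of_lt h (mem_range.1 hj)),
    if_pos (dvd_zero p), zero_add]

theorem quadGaussSum_intCast_mul_of_coprime {a b : ℕ} [NeZero a] [NeZero b] (hab : a.Coprime b)
    {u v : ℤ} (huv : u * a + v * b = 1) (x : ℤ) :
    quadGaussSum ZMod.stdAddChar (x : ZMod (a * b)) =
      quadGaussSum ZMod.stdAddChar ((v * x : ℤ) : ZMod a) *
        quadGaussSum ZMod.stdAddChar ((u * x : ℤ) : ZMod b) := by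
  simp only [quadGaussSum]
  rw [sum_mul_sum, ← sum_product', univ_product_univ,
    ← (ZMod.chineseRemainder hab).toEquiv.sum_comp]
  refine sum_congr rfl fun y _ ↦ ?_
  obtain ⟨k, rfl⟩ := ZMod.intCast_surjective y
  rw [← Int.cast_pow, ← Int.cast_mul, stdAddChar_intCast_split rfl huv]
  simp [mul_assoc]

theorem sum_range_stdAddChar_mul (p : ℕ) [NeZero p] (t : ℤ) :
    ∑ z ∈ range p, ZMod.stdAddChar ((z * t : ℤ) : ZMod p) = if (p : ℤ) ∣ t then (p : ℂ) else 0 := by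
  have orthogonality := AddChar.sum_mulShift (t : ZMod p) (ZMod.isPrimitive_stdAddChar p)
  simp only [sum_zmod_eq_sum_range, ZMod.intCast_zmod_eq_zero_iff_dvd, ZMod.card, Nat.cast_ite,
    Nat.cast_zero] at orthogonality
  simpa only [Int.cast_mul, Int.cast_natCast] using orthogonality

theorem sum_range_stdAddChar_sq_add {p q : ℕ} [NeZero p] [NeZero q] {x : ℤ}
    (hx : IsCoprime (p : ℤ) (2 * x)) (y : ℤ) :
    ∑ z ∈ range p, ZMod.stdAddChar ((x * (y + p * q * z) ^ 2 : ℤ) : ZMod (p * (p * q))) =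
      if (p : ℤ) ∣ y then p * ZMod.stdAddChar ((x * y ^ 2 : ℤ) : ZMod (p * (p * q))) else 0 := by
  have term (z : ℕ) : ZMod.stdAddChar ((x * (y + p * q * z) ^ 2 : ℤ) : ZMod (p * (p * q))) =
      ZMod.stdAddChar ((x * y ^ 2 : ℤ) : ZMod (p * (p * q))) *
        ZMod.stdAddChar ((z * (2 * x * y) : ℤ) : ZMod p) := by
    rw [← stdAddChar_mul_intCast (a := p * q) (by ring : p * q * p = p * (p * q)),
      ← AddChar.map_add_eq_mul, ← Int.cast_add]
    congr 1
    refine (ZMod.intCast_eq_intCast_iff_dvd_sub _ _ _).2 ⟨-(x * q * z ^ 2), ?_⟩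
    push_cast
    ring
  have dvd_iff : (p : ℤ) ∣ 2 * x * y ↔ (p : ℤ) ∣ y :=
    ⟨hx.dvd_of_dvd_mul_left, fun h ↦ h.mul_left _⟩
  simp only [term, ← mul_sum, sum_range_stdAddChar_mul, dvd_iff, mul_ite, mul_zero]
  rw [mul_comm]

theorem quadGaussSum_sq_mul {p q : ℕ} [NeZero p] [NeZero q] {x : ℤ}
    (hx : IsCoprime (p : ℤ) (2 * x)) :
    quadGaussSum ZMod.stdAddChar (x : ZMod (p * (p * q))) =
      p * quadGaussSum ZMod.stdAddChar (x : ZMod q) := by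
  have diagonal (i : ℕ) : ZMod.stdAddChar ((x * (p * i) ^ 2 : ℤ) : ZMod (p * (p * q))) =
      ZMod.stdAddChar ((x * i ^ 2 : ℤ) : ZMod q) := by
    rw [← stdAddChar_mul_intCast (a := p * p) (mul_assoc p p q)]
    push_cast
    ring_nf
  have inner (y : ℕ) := sum_range_stdAddChar_sq_add (q := q) hx y
  calc quadGaussSum ZMod.stdAddChar (x : ZMod (p * (p * q)))
      = ∑ y ∈ range (p * (p * q)),
          ZMod.stdAddChar ((x * y ^ 2 : ℤ) : ZMod (p * (p * q))) := by
        simp only [quadGaussSum, sum_zmod_eq_sum_range, Int.cast_mul, Int.cast_pow,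
          Int.cast_natCast]
    _ = ∑ y ∈ range (p * q), if (p : ℤ) ∣ y then
          p * ZMod.stdAddChar ((x * y ^ 2 : ℤ) : ZMod (p * (p * q))) else 0 := by
        rw [sum_range_mul, sum_comm]
        refine sum_congr rfl fun y _ ↦ ?_
        rw [← inner]
        push_cast
        rfl
    _ = ∑ i ∈ range q, p * ZMod.stdAddChar ((x * (p * i) ^ 2 : ℤ) : ZMod (p * (p * q))) := by
        simp only [Int.natCast_dvd_natCast]
        rw [sum_range_ite_dvd (NeZero.ne p) q
          fun y ↦ p * ZMod.stdAddChar ((x * y ^ 2 : ℤ) : ZMod (p * (p * q)))]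
        simp only [Nat.cast_mul]
    _ = p * quadGaussSum ZMod.stdAddChar (x : ZMod q) := by
        simp only [diagonal]
        simp only [quadGaussSum, sum_zmod_eq_sum_range, mul_sum, Int.cast_mul, Int.cast_pow,
          Int.cast_natCast]

theorem quadGaussSum_intCast_prime {p : ℕ} [Fact p.Prime] (hp : p ≠ 2) {x : ℤ}
    (hx : IsCoprime x (p : ℤ)) :
    quadGaussSum ZMod.stdAddChar (x : ZMod p) =
      J(x | p) * quadGaussSum ZMod.stdAddChar (1 : ZMod p) := by
  have hx0 : (x : ZMod p) ≠ 0 := ((ZMod.coe_int_isUnit_iff_isCoprime x p).2 hx.symm).ne_zero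
  rw [quadGaussSum_eq_quadraticChar_mul ((ZMod.ringChar_zmod_n p).trans_ne hp)
    (ZMod.isPrimitive_stdAddChar p) hx0, ← jacobiSym.legendreSym.to_jacobiSym, legendreSym]

theorem quadGaussSum_intCast_prime_pow {p : ℕ} [hp : Fact p.Prime] (hp2 : p ≠ 2) {x : ℤ}
    (hx : IsCoprime x (p : ℤ)) {q n : ℕ} [hq0 : NeZero q] (hq : p ^ n = q) :
    quadGaussSum ZMod.stdAddChar (x : ZMod q) =
      J(x | q) * quadGaussSum ZMod.stdAddChar (1 : ZMod q) := by
  induction n using Nat.twoStepInduction generalizing q hq0 with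
  | zero =>
    obtain rfl : 1 = q := hq
    rw [Subsingleton.elim (x : ZMod 1) 1, jacobiSym.one_right, Int.cast_one, one_mul]
  | one =>
    obtain rfl : p = q := (pow_one p).symm.trans hq
    exact quadGaussSum_intCast_prime hp2 hx
  | more n ih _ =>
    obtain rfl : p * (p * p ^ n) = q := by rw [← hq]; ring
    have isCoprime_two_mul {w : ℤ} (hw : IsCoprime w (p : ℤ)) : IsCoprime (p : ℤ) (2 * w) :=
      IsCoprime.mul_right (Nat.isCoprime_iff_coprime.2
        ((Nat.coprime_primes hp.out Nat.prime_two).2 hp2)) hw.symm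
    have reduce_one := quadGaussSum_sq_mul (q := p ^ n) (isCoprime_two_mul isCoprime_one_left)
    rw [Int.cast_one, Int.cast_one] at reduce_one
    rw [quadGaussSum_sq_mul (isCoprime_two_mul hx), reduce_one, ih rfl, jacobiSym.mul_right,
      jacobiSym.mul_right, ← mul_assoc J(x | p), ← sq,
      jacobiSym.sq_one (Int.isCoprime_iff_gcd_eq_one.1 hx), one_mul]
    ring

theorem quadGaussSum_intCast {q : ℕ} [hq0 : NeZero q] (hq : Odd q) {x : ℤ}
    (hx : IsCoprime x (q : ℤ)) :
    quadGaussSum ZMod.stdAddChar (x : ZMod q) =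
      J(x | q) * quadGaussSum ZMod.stdAddChar (1 : ZMod q) := by
  induction q using Nat.recOnPrimeCoprime generalizing hq0 x with
  | zero => exact absurd hq (by decide)
  | prime_pow p n hp =>
    rcases eq_or_ne n 0 with rfl | hn
    · have : Subsingleton (ZMod (p ^ 0)) := inferInstanceAs (Subsingleton (ZMod 1))
      have one_right : J(x | p ^ 0) = 1 := by rw [pow_zero, jacobiSym.one_right]
      rw [Subsingleton.elim (x : ZMod (p ^ 0)) 1, one_right, Int.cast_one, one_mul]
    have : Fact p.Prime := ⟨hp⟩
    refine quadGaussSum_intCast_prime_pow (hq.ne_two_of_dvd_nat (dvd_pow_self p hn)) ?_ rfl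
    exact (IsCoprime.pow_right_iff (Nat.pos_of_ne_zero hn)).1 (by rwa [← Nat.cast_pow])
  | coprime a b ha hb hab iha ihb =>
    have : NeZero a := ⟨by lia⟩
    have : NeZero b := ⟨by lia⟩
    obtain ⟨hqa, hqb⟩ := Nat.odd_mul.1 hq
    obtain ⟨u, v, huv⟩ := Nat.isCoprime_iff_coprime.2 hab
    rw [Nat.cast_mul] at hx
    have hva : IsCoprime v (a : ℤ) := ⟨b, u, by linarith⟩
    have hub : IsCoprime u (b : ℤ) := ⟨a, v, by linarith⟩
    have split := quadGaussSum_intCast_mul_of_coprime hab huv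
    have split_one := split 1
    simp only [mul_one, Int.cast_one] at split_one
    rw [split, split_one, iha hqa (hva.mul_left hx.of_mul_right_left),
      ihb hqb (hub.mul_left hx.of_mul_right_right), iha hqa hva, ihb hqb hub,
      jacobiSym.mul_left, jacobiSym.mul_left, jacobiSym.mul_right]
    push_cast
    ring

theorem isCoprime_val_unit {q : ℕ} (t : (ZMod q)ˣ) : IsCoprime ((t : ZMod q).val : ℤ) (q : ℤ) :=
  Nat.isCoprime_iff_coprime.2 (ZMod.val_coe_unit_coprime t)

theorem quadGaussSum_unit_mul {q : ℕ} [NeZero q] (hq : Odd q) (x t : (ZMod q)ˣ) :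
    quadGaussSum ZMod.stdAddChar (x * t : ZMod q) =
      J((t : ZMod q).val | q) * quadGaussSum ZMod.stdAddChar (x : ZMod q) := by
  have val_mul := quadGaussSum_intCast hq ((isCoprime_val_unit x).mul_left (isCoprime_val_unit t))
  have val := quadGaussSum_intCast hq (isCoprime_val_unit x)
  simp only [Int.cast_mul, Int.cast_natCast, ZMod.natCast_zmod_val] at val_mul val
  rw [val_mul, val, jacobiSym.mul_left]
  push_cast
  ring

end QuadraticGaussSumZMod

section SalieIdentity

variable {R : Type*} [CommRing R] [Fintype R] {ψ : AddChar R ℂ}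

theorem quadGaussSum_mul_eq_sum (a b : R) (t : Rˣ) :
    quadGaussSum ψ (-b * t) * ψ (a * t + b * ↑t⁻¹) =
      ∑ y, ψ (a * t - b * t * y ^ 2 - 2 * b * y) := by
  rw [quadGaussSum, ← Equiv.sum_comp (Equiv.addRight (↑t⁻¹ : R)), sum_mul]
  refine sum_congr rfl fun y _ ↦ ?_
  rw [← AddChar.map_add_eq_mul]
  congr 1
  simp only [Equiv.coe_addRight]
  linear_combination (-b * (2 * y + (↑t⁻¹ : R))) * t.mul_inv

theorem sum_quadratic_eq_zero_of_not_isUnit (hψ : ψ.IsPrimitive) (h2 : IsUnit (2 : R)) (a : R)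
    (b : Rˣ) {t : R} (ht : ¬IsUnit t) : ∑ y, ψ (a * t - b * t * y ^ 2 - 2 * b * y) = 0 := by
  classical
  rw [isUnit_iff_mem_nonZeroDivisors_of_finite, mem_nonZeroDivisors_iff_right] at ht
  push Not at ht
  obtain ⟨s, hst, hs⟩ := ht
  have translate (z : R) : ∑ y, ψ (a * t - b * t * y ^ 2 - 2 * b * y) =
      ψ (z * (-2 * b * s)) * ∑ y, ψ (a * t - b * t * y ^ 2 - 2 * b * y) := by
    rw [mul_sum, ← Equiv.sum_comp (Equiv.addRight (s * z))]
    refine sum_congr rfl fun y _ ↦ ?_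
    rw [← AddChar.map_add_eq_mul]
    congr 1
    simp only [Equiv.coe_addRight]
    linear_combination (-(b : R) * (2 * y * z + s * z ^ 2)) * hst
  by_contra hne
  have trivial (z : R) : ψ (z * (-2 * b * s)) = 1 :=
    mul_right_cancel₀ hne ((translate z).symm.trans (one_mul _).symm)
  have orthogonality := AddChar.sum_mulShift (-2 * b * s) hψ
  have shift_ne : -2 * b * s ≠ 0 := fun h ↦ hs ((h2.neg.mul b.isUnit).mul_right_eq_zero.1 h)
  simp only [trivial, sum_const, card_univ, nsmul_eq_mul, mul_one, if_neg shift_ne,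
    Nat.cast_eq_zero, Nat.cast_zero] at orthogonality
  exact Fintype.card_ne_zero orthogonality

theorem sum_sum_quadratic [DecidableEq R] (hψ : ψ.IsPrimitive) (a b : R) :
    ∑ t, ∑ y, ψ (a * t - b * t * y ^ 2 - 2 * b * y) =
      Fintype.card R * ∑ y with b * y ^ 2 = a, ψ (-(2 * b * y)) := by
  rw [sum_comm, sum_filter, mul_sum]
  refine sum_congr rfl fun y _ ↦ ?_
  have term (t : R) : ψ (a * t - b * t * y ^ 2 - 2 * b * y) =
      ψ (t * (a - b * y ^ 2)) * ψ (-(2 * b * y)) := by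
    rw [← AddChar.map_add_eq_mul]
    congr 1
    ring
  simp only [term, ← sum_mul, AddChar.sum_mulShift _ hψ, sub_eq_zero, eq_comm (a := a)]
  split_ifs <;> simp

theorem sum_units_quadGaussSum_mul [DecidableEq R] (hψ : ψ.IsPrimitive) (h2 : IsUnit (2 : R))
    (a : R) (b : Rˣ) :
    ∑ t : Rˣ, quadGaussSum ψ (-b * t) * ψ (a * t + b * ↑t⁻¹) =
      Fintype.card R * ∑ y with b * y ^ 2 = a, ψ (-(2 * b * y)) := by
  rw [← sum_sum_quadratic hψ a b]
  refine Fintype.sum_of_injective Units.val Units.val_injective _ _ (fun t ht ↦ ?_)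
    fun t ↦ quadGaussSum_mul_eq_sum a b t
  exact sum_quadratic_eq_zero_of_not_isUnit hψ h2 a b ht

end SalieIdentity

section QuadraticRoots

theorem card_mul_sq_eq_le {M : Type*} [CommMonoid M] [Fintype M] [DecidableEq M] (a b : Mˣ) :
    #{y : M | b * y ^ 2 = a} ≤ #{y : M | y ^ 2 = 1} := by
  rcases eq_empty_or_nonempty {y : M | b * y ^ 2 = a} with h | ⟨y₀, hy₀⟩
  · rw [h]
    exact Nat.zero_le _
  simp only [mem_filter, mem_univ, true_and] at hy₀
  have isUnit_y₀ : IsUnit y₀ :=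
    (isUnit_pow_iff two_ne_zero).1 (isUnit_of_mul_isUnit_right (hy₀ ▸ a.isUnit))
  obtain ⟨u, rfl⟩ := isUnit_y₀
  refine card_le_card_of_injOn (· * ↑u⁻¹) (fun y hy ↦ ?_) ((u⁻¹).isUnit.mul_left_injective.injOn)
  simp only [coe_filter, mem_univ, true_and, Set.mem_ofPred_eq] at hy ⊢
  rw [mul_pow, b.isUnit.mul_left_cancel (hy.trans hy₀.symm), ← mul_pow, Units.mul_inv, one_pow]

theorem eq_of_sq_eq_one_of_dvd {R : Type*} [CommRing R] (h2 : IsUnit (2 : R)) {y z : R}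
    (hy : y ^ 2 = 1) (hz : z ^ 2 = 1) (hyz : y - 1 ∣ z - 1) (hzy : z - 1 ∣ y - 1) : y = z := by
  obtain ⟨r, hr⟩ := hyz
  obtain ⟨s, hs⟩ := hzy
  refine h2.mul_left_cancel ?_
  linear_combination (z + 1) * hs - (y + 1) * hr + s * hz - r * hy

theorem dvd_of_gcd_val_eq {q : ℕ} [NeZero q] {y z : ZMod q} (h : y.val.gcd q = z.val.gcd q) :
    y ∣ z :=
  calc y ∣ (z.val.gcd q : ℕ) := ⟨y⁻¹, by rw [ZMod.mul_inv_eq_gcd, h]⟩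
    _ ∣ (z.val : ZMod q) := Nat.cast_dvd_cast (Nat.gcd_dvd_left _ _)
    _ = z := ZMod.natCast_zmod_val z

theorem isUnit_two_zmod {q : ℕ} (hq : Odd q) : IsUnit (2 : ZMod q) :=
  mod_cast (ZMod.isUnit_iff_coprime 2 q).2 (Nat.coprime_two_left.2 hq)

theorem card_sq_eq_one_le {q : ℕ} [NeZero q] (hq : Odd q) :
    #{y : ZMod q | y ^ 2 = 1} ≤ #q.divisors := by
  refine card_le_card_of_injOn (fun y ↦ (y - 1).val.gcd q)
    (fun y _ ↦ Nat.mem_divisors.2 ⟨Nat.gcd_dvd_right _ _, NeZero.ne q⟩) fun y hy z hz hyz ↦ ?_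
  simp only [coe_filter, mem_univ, true_and, Set.mem_ofPred_eq] at hy hz
  exact eq_of_sq_eq_one_of_dvd (isUnit_two_zmod hq) hy hz (dvd_of_gcd_val_eq hyz)
    (dvd_of_gcd_val_eq hyz.symm)

end QuadraticRoots

section SalieSum

/-- The term at `t` of the Salié sum `salieSum q a b`. -/
noncomputable def salieTerm (q : ℕ) [NeZero q] (a b : ZMod q) (t : (ZMod q)ˣ) : ℂ :=
  J((t : ZMod q).val | q) * ZMod.stdAddChar (a * t + b * ↑t⁻¹ : ZMod q)

/-- The Salié sum modulo `q`: the Kloosterman sum of `a` and `b` twisted by the Jacobi symbol. -/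
noncomputable def salieSum (q : ℕ) [NeZero q] (a b : ZMod q) : ℂ :=
  ∑ t, salieTerm q a b t

variable {q : ℕ} [NeZero q]

theorem quadGaussSum_mul_salieSum (hq : Odd q) (a : ZMod q) (b : (ZMod q)ˣ) :
    quadGaussSum ZMod.stdAddChar (-b : ZMod q) * salieSum q a b =
      q * ∑ y with b * y ^ 2 = a, ZMod.stdAddChar (-(2 * b * y) : ZMod q) := by
  have key := sum_units_quadGaussSum_mul (ZMod.isPrimitive_stdAddChar q) (isUnit_two_zmod hq) a b
  rw [ZMod.card] at key
  rw [← key, salieSum, mul_sum]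
  refine sum_congr rfl fun t _ ↦ ?_
  rw [← Units.val_neg, quadGaussSum_unit_mul hq, salieTerm]
  ring

theorem norm_salieSum_le (hq : Odd q) {a b : ZMod q} (ha : IsUnit a) (hb : IsUnit b) :
    ‖salieSum q a b‖ ≤ √q * #q.divisors := by
  obtain ⟨a, rfl⟩ := ha
  obtain ⟨b, rfl⟩ := hb
  have sqrt_pos : 0 < √(q : ℝ) := Real.sqrt_pos.2 (mod_cast hq.pos)
  have roots_le : #{y : ZMod q | b * y ^ 2 = a} ≤ #q.divisors :=
    (card_mul_sq_eq_le a b).trans (card_sq_eq_one_le hq)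
  have norm_gauss : ‖quadGaussSum ZMod.stdAddChar (-b : ZMod q)‖ = √q := by
    rw [norm_quadGaussSum (ZMod.isPrimitive_stdAddChar q)
      ((isUnit_two_zmod hq).mul b.isUnit.neg), ZMod.card]
  refine le_of_mul_le_mul_left ?_ sqrt_pos
  calc √q * ‖salieSum q a b‖
      = q * ‖∑ y with b * y ^ 2 = (a : ZMod q), ZMod.stdAddChar (-(2 * b * y) : ZMod q)‖ := by
        rw [← norm_gauss, ← norm_mul, quadGaussSum_mul_salieSum hq, norm_mul, Complex.norm_natCast]
    _ ≤ q * #q.divisors := by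
        gcongr
        refine (norm_sum_le _ _).trans ?_
        simp only [AddChar.norm_apply, sum_const, nsmul_eq_mul, mul_one]
        exact mod_cast roots_le
    _ = √q * (√q * #q.divisors) := by
        rw [← mul_assoc, Real.mul_self_sqrt (Nat.cast_nonneg q)]

end SalieSum

section KloostermanTerm

theorem sum_Icc_eq_sum_zmod {M : Type*} [AddCommMonoid M] {c : ℕ} [NeZero c] (f : ZMod c → M) :
    ∑ d ∈ Icc 1 c, f d = ∑ x, f x := by
  obtain ⟨k, rfl⟩ := Nat.exists_eq_add_one_of_ne_zero (NeZero.ne c)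
  rw [sum_zmod_eq_sum_range, ← Ico_add_one_right_eq_Icc, sum_Ico_succ_top (Nat.le_add_left 1 k),
    range_eq_Ico, sum_eq_sum_Ico_succ_bot k.succ_pos,
    ZMod.natCast_self, Nat.cast_zero, add_comm]

theorem sum_isUnit_eq_sum_units {R M : Type*} [Monoid R] [Fintype R] [Fintype Rˣ]
    [DecidablePred fun x : R ↦ IsUnit x] [AddCommMonoid M] (f : R → M) :
    ∑ x : R with IsUnit x, f x = ∑ u : Rˣ, f u := by
  rw [sum_filter]
  exact (Fintype.sum_of_injective Units.val Units.val_injective (fun u : Rˣ ↦ f u) _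
    (fun x hx ↦ if_neg hx) fun u ↦ (if_pos u.isUnit).symm).symm

theorem exp_dedekindS (d : ℤ) {c : ℕ} [NeZero c] :
    Complex.exp (Real.pi * Complex.I * dedekindS d c) =
      ZMod.stdAddChar ((dedekindInt d c : ℤ) : ZMod (24 * c)) := by
  have hc : (c : ℂ) ≠ 0 := NeZero.ne _
  have dedekind : (12 * c * dedekindS d c : ℂ) = dedekindInt d c :=
    mod_cast congrArg ((↑) : ℝ → ℂ) (twelve_mul_dedekindS d (NeZero.ne c))
  rw [ZMod.stdAddChar_coe, ← dedekind]
  push_cast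
  congr 1
  field_simp
  ring

/-- The summand of the Kloosterman sum `klooS m n c`, as a function on `ZMod c`. -/
noncomputable def klooTerm (m n : ℤ) (c : ℕ) [NeZero c] (x : ZMod c) : ℂ :=
  Complex.exp (Real.pi * Complex.I * dedekindS x.val c) *
    ZMod.stdAddChar (((m : ZMod c) - 1) * x⁻¹ + ((n : ZMod c) - 1) * x)

theorem norm_klooS (m n : ℤ) (c : ℕ) [NeZero c] :
    ‖klooS m n c‖ = ‖∑ x : (ZMod c)ˣ, klooTerm m n c x‖ := by
  classical
  have norm_exp : ‖Complex.exp (Real.pi * Complex.I / 4)‖ = 1 := by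
    rw [mul_div_right_comm]
    exact mod_cast Complex.norm_exp_ofReal_mul_I (Real.pi / 4)
  rw [klooS, norm_mul, norm_exp, one_mul, ← sum_isUnit_eq_sum_units, sum_filter, sum_filter,
    ← sum_Icc_eq_sum_zmod]
  simp only [ZMod.isUnit_iff_coprime, Nat.Coprime]
  refine congrArg _ (sum_congr rfl fun d _ ↦ if_congr Iff.rfl ?_ rfl)
  have val_modEq : ((d : ZMod c).val : ℤ) ≡ d [ZMOD c] := by
    rw [ZMod.val_natCast]
    exact Int.mod_modEq d c
  rw [klooTerm, exp_dedekindS, exp_dedekindS, dedekindInt_congr val_modEq]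
  have phase := eFun_intCast_div c ((m - 1) * ((d : ZMod c)⁻¹).val + (n - 1) * d)
  push_cast [ZMod.natCast_zmod_val] at phase
  rw [phase]

theorem stdAddChar_four_one_add {J : ℤ} (hJ : J = 1 ∨ J = -1) :
    ZMod.stdAddChar ((1 + J : ℤ) : ZMod 4) = (-J : ℂ) := by
  rcases hJ with rfl | rfl
  · rw [ZMod.stdAddChar_coe]
    have : 2 * (Real.pi : ℂ) * Complex.I * ((1 + 1 : ℤ) : ℂ) / (4 : ℕ) = Real.pi * Complex.I := by
      push_cast
      ring
    rw [this, Complex.exp_pi_mul_I, Int.cast_one]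
  · simp

theorem klooTerm_natCast (m n : ℤ) {c N d d' : ℕ} [NeZero c] [NeZero N] (hN : 24 * c = N)
    (hd : d.Coprime (6 * c)) (hdd' : (d * d' : ℤ) ≡ 1 [ZMOD N]) :
    klooTerm m n c d = -J(c | d) * ZMod.stdAddChar (((c + 9) * d' : ℤ) : ZMod 24) *
      ZMod.stdAddChar (((24 * n - 23) * d + (24 * m - 23) * d' : ℤ) : ZMod N) := by
  subst hN
  have val_modEq : ((d : ZMod c).val : ℤ) ≡ d [ZMOD c] := by
    rw [ZMod.val_natCast]
    exact Int.mod_modEq d c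
  have inv_eq : (d : ZMod c)⁻¹ = d' := by
    have modEq : (d * d' : ℤ) ≡ 1 [ZMOD c] := hdd'.of_dvd (mod_cast dvd_mul_left c 24)
    rw [← ZMod.intCast_eq_intCast_iff] at modEq
    push_cast at modEq
    exact ZMod.inv_eq_of_mul_eq_one c _ _ modEq
  have dedekind : ((dedekindInt d c : ℤ) : ZMod (24 * c)) =
      ((d + d' + c * ((c + 9) * d' + 6 * (1 + J(c | d))) : ℤ) : ZMod (24 * c)) :=
    (ZMod.intCast_eq_intCast_iff _ _ _).2
      (mod_cast dedekindInt_modEq (Nat.pos_of_ne_zero (NeZero.ne c)) hd (mod_cast hdd'))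
  have jacobi : J(c | d) = 1 ∨ J(c | d) = -1 :=
    jacobiSym_eq_one_or_neg_one (Nat.isCoprime_iff_coprime.2 hd.coprime_mul_left_right.symm)
  set J := J(c | d)
  have sign : ZMod.stdAddChar (((6 * c : ℕ) * (1 + J) : ℤ) : ZMod (24 * c)) = (-J : ℂ) := by
    rw [stdAddChar_mul_intCast (b := 4) (by ring), stdAddChar_four_one_add jacobi]
  have phase : ZMod.stdAddChar (((m - 1) * d' + (n - 1) * d : ℤ) : ZMod c) =
      ZMod.stdAddChar (((24 : ℕ) * ((m - 1) * d' + (n - 1) * d) : ℤ) : ZMod (24 * c)) :=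
    (stdAddChar_mul_intCast rfl _).symm
  rw [← sign, ← stdAddChar_mul_intCast (mul_comm c 24), ← AddChar.map_add_eq_mul,
    ← AddChar.map_add_eq_mul, klooTerm, exp_dedekindS, dedekindInt_congr val_modEq, inv_eq,
    dedekind]
  push_cast at phase ⊢
  rw [phase, ← AddChar.map_add_eq_mul]
  congr 1
  ring

end KloostermanTerm

section KloostermanBound

theorem card_nsmul_sum_comp {G H M : Type*} [Group G] [Fintype G] [Group H] [Fintype H]
    [AddCommMonoid M] {φ : G →* H} (hφ : Function.Surjective φ) (f : H → M) :
    Fintype.card H • ∑ g, f (φ g) = Fintype.card G • ∑ h, f h := by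
  have translate (h : H) : ∑ g, f (φ g) = ∑ g, f (h * φ g) := by
    obtain ⟨g₀, rfl⟩ := hφ h
    simp only [← map_mul]
    exact (Fintype.sum_equiv (Equiv.mulLeft g₀) _ _ fun _ ↦ rfl).symm
  calc Fintype.card H • ∑ g, f (φ g)
      = ∑ h, ∑ g, f (h * φ g) := by
        rw [← card_univ, ← sum_const]
        exact sum_congr rfl fun h _ ↦ translate h
    _ = ∑ g, ∑ h, f (h * φ g) := sum_comm
    _ = Fintype.card G • ∑ h, f h := by
        rw [← card_univ, ← sum_const]
        exact sum_congr rfl fun g _ ↦ Fintype.sum_equiv (Equiv.mulRight (φ g)) _ _ fun _ ↦ rfl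

theorem sum_unitsMap_mul_unitsMap {R : Type*} [CommSemiring R] {a b : ℕ} [NeZero a] [NeZero b]
    (hab : a.Coprime b) (f : (ZMod a)ˣ → R) (g : (ZMod b)ˣ → R) :
    ∑ y, f (ZMod.unitsMap (dvd_mul_right a b) y) * g (ZMod.unitsMap (dvd_mul_left b a) y) =
      (∑ s, f s) * ∑ t, g t := by
  let e : (ZMod (a * b))ˣ ≃ (ZMod a)ˣ × (ZMod b)ˣ :=
    ((Units.mapEquiv (ZMod.chineseRemainder hab).toMulEquiv).trans MulEquiv.prodUnits).toEquiv
  have he (y : (ZMod (a * b))ˣ) : e y =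
      (ZMod.unitsMap (dvd_mul_right a b) y, ZMod.unitsMap (dvd_mul_left b a) y) := by
    refine Prod.ext (Units.ext ?_) (Units.ext ?_)
    · exact RingHom.congr_fun (Subsingleton.elim
        ((RingHom.fst _ _).comp (ZMod.chineseRemainder hab).toRingHom)
        (ZMod.castHom (dvd_mul_right a b) _)) y
    · exact RingHom.congr_fun (Subsingleton.elim
        ((RingHom.snd _ _).comp (ZMod.chineseRemainder hab).toRingHom)
        (ZMod.castHom (dvd_mul_left b a) _)) y
  rw [sum_mul_sum, ← Fintype.sum_prod_type', ← e.sum_comp]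
  simp only [he]

/-- The part of the term of `klooS m n (a * b)` at `x` which only depends on a lift `ρ` of `x` to a
unit modulo `24 * a`. The other part is a term of a Salié sum modulo `b`, and `v` is the inverse of
`b` modulo `24 * a`. -/
noncomputable def klooWeight (m n v : ℤ) (a b : ℕ) [NeZero a] (ρ : (ZMod (24 * a))ˣ) : ℂ :=
  -(J(a | (ρ : ZMod (24 * a)).val) * qrSign (ρ : ZMod (24 * a)).val b) *
    ZMod.stdAddChar ((a * b + 9) * ((ρ⁻¹ : (ZMod (24 * a))ˣ) : ZMod (24 * a)).val : ZMod 24) *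
    ZMod.stdAddChar (v * ((24 * n - 23) * ρ + (24 * m - 23) * (ρ⁻¹ : (ZMod (24 * a))ˣ)) :
      ZMod (24 * a))

theorem norm_klooWeight_le (m n v : ℤ) (a b : ℕ) [NeZero a] (ρ : (ZMod (24 * a))ˣ) :
    ‖klooWeight m n v a b ρ‖ ≤ 1 := by
  have norm_jacobi (x : ℤ) (q : ℕ) : ‖(J(x | q) : ℂ)‖ ≤ 1 := by
    rcases jacobiSym.trichotomy x q with h | h | h <;> simp [h]
  rw [klooWeight, norm_mul, norm_mul, norm_neg, norm_mul, AddChar.norm_apply, AddChar.norm_apply,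
    mul_one, mul_one]
  exact mul_le_one₀ (norm_jacobi _ _) (norm_nonneg _) (norm_jacobi _ _)

theorem jacobiSym_natCast_mul_eq {a b d : ℕ} (hb : Odd b) (hd : Odd d) :
    J((a * b : ℕ) | d) =
      J(a | d % (24 * a)) * (qrSign (d % (24 * a)) b * J((d % b : ℕ) | b)) := by
  have mod_odd : Odd (d % (24 * a)) := by
    rw [Nat.odd_iff, Nat.mod_mod_of_dvd _ ⟨12 * a, by ring⟩, ← Nat.odd_iff]
    exact hd
  have mod_four : ((d % (24 * a) : ℕ) : ZMod 4) = d :=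
    (ZMod.natCast_eq_natCast_iff' _ _ _).2 (Nat.mod_mod_of_dvd _ ⟨6 * a, by ring⟩)
  rw [Nat.cast_mul, jacobiSym.mul_left, jacobiSym.mod_right' a hd, jacobiSym.mod_right' a mod_odd,
    Nat.mod_mod_of_dvd _ (mul_dvd_mul_right (by norm_num) a),
    jacobiSym.quadratic_reciprocity' hb hd, qrSign, qrSign, mod_four, Int.natCast_mod,
    ← jacobiSym.mod_left]

theorem klooTerm_unitsMap (m n : ℤ) {a b : ℕ} [NeZero a] [NeZero b] (hb : Odd b) {u v : ℤ}
    (huv : u * (24 * a : ℕ) + v * b = 1) (y : (ZMod (24 * a * b))ˣ) :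
    klooTerm m n (a * b) (ZMod.unitsMap (mul_dvd_mul_right (dvd_mul_left a 24) b) y) =
      klooWeight m n v a b (ZMod.unitsMap (dvd_mul_right (24 * a) b) y) *
        salieTerm b ((u * (24 * n - 23) : ℤ) : ZMod b) ((u * (24 * m - 23) : ℤ) : ZMod b)
          (ZMod.unitsMap (dvd_mul_left b (24 * a)) y) := by
  set ρ := ZMod.unitsMap (dvd_mul_right (24 * a) b) y with hρ
  set t := ZMod.unitsMap (dvd_mul_left b (24 * a)) y with ht
  set d := (y : ZMod (24 * a * b)).val with hd
  set d' := ((y⁻¹ : (ZMod (24 * a * b))ˣ) : ZMod (24 * a * b)).val with hd'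
  have d_coprime : d.Coprime (24 * a * b) := ZMod.val_coe_unit_coprime y
  have d_odd : Odd d := Nat.coprime_two_right.1 (d_coprime.coprime_dvd_right ⟨12 * a * b, by ring⟩)
  have mul_modEq : (d * d' : ℤ) ≡ 1 [ZMOD (24 * a * b : ℕ)] := by
    rw [← ZMod.intCast_eq_intCast_iff]
    simp [hd, hd']
  have ρ_eq : (ρ : ZMod (24 * a)) = d := by simp [hρ, hd, ZMod.unitsMap_val]
  have ρ_inv_eq : ((ρ⁻¹ : (ZMod (24 * a))ˣ) : ZMod (24 * a)) = d' := by
    simp [hρ, hd', ← map_inv, ZMod.unitsMap_val]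
  have t_eq : (t : ZMod b) = d := by simp [ht, hd, ZMod.unitsMap_val]
  have t_inv_eq : ((t⁻¹ : (ZMod b)ˣ) : ZMod b) = d' := by
    simp [ht, hd', ← map_inv, ZMod.unitsMap_val]
  have y_eq : (ZMod.unitsMap (mul_dvd_mul_right (dvd_mul_left a 24) b) y : ZMod (a * b)) = d := by
    simp [hd, ZMod.unitsMap_val]
  have ψ_24 : ((d' % (24 * a) : ℕ) : ZMod 24) = d' :=
    (ZMod.natCast_eq_natCast_iff _ _ _).2 ((Nat.mod_modEq d' (24 * a)).of_mul_right a)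
  rw [klooWeight, salieTerm, y_eq, klooTerm_natCast m n (mul_assoc 24 a b).symm
    (d_coprime.coprime_dvd_right ⟨4, by ring⟩) mul_modEq, stdAddChar_intCast_split rfl huv,
    ρ_eq, ρ_inv_eq, t_eq, t_inv_eq, ZMod.val_natCast, ZMod.val_natCast, ZMod.val_natCast, ψ_24,
    jacobiSym_natCast_mul_eq hb d_odd]
  push_cast
  ring_nf

theorem totient_mul_norm_klooS (m n : ℤ) {a b : ℕ} [NeZero a] [NeZero b] (hb : Odd b)
    (hab : (24 * a).Coprime b) {u v : ℤ} (huv : u * (24 * a : ℕ) + v * b = 1) :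
    (24 * a * b).totient * ‖klooS m n (a * b)‖ = (a * b).totient *
      (‖∑ ρ, klooWeight m n v a b ρ‖ * ‖salieSum b (u * (24 * n - 23) : ℤ)
        (u * (24 * m - 23) : ℤ)‖) := by
  have lift := card_nsmul_sum_comp (ZMod.unitsMap_surjective
    (mul_dvd_mul_right (dvd_mul_left a 24) b)) fun x ↦ klooTerm m n (a * b) x
  simp only [klooTerm_unitsMap m n hb huv, sum_unitsMap_mul_unitsMap hab,
    ZMod.card_units_eq_totient] at lift
  simpa only [nsmul_eq_mul, norm_mul, Complex.norm_natCast, norm_klooS, salieSum]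
    using (congrArg norm lift).symm

theorem norm_klooS_mul_le (m n : ℤ) {a b : ℕ} (ha : a ≠ 0) (hab : (6 * a).Coprime b)
    (hm : IsCoprime (24 * m - 23) (b : ℤ)) (hn : IsCoprime (24 * n - 23) (b : ℤ)) :
    ‖klooS m n (a * b)‖ ≤ a * (√b * #b.divisors) := by
  have : NeZero a := ⟨ha⟩
  have : NeZero b := ⟨by rintro rfl; rw [Nat.coprime_zero_right] at hab; lia⟩
  have b_odd : Odd b := Nat.coprime_two_left.1 (hab.coprime_dvd_left ⟨3 * a, by ring⟩)
  have coprime_a : a.Coprime b := hab.coprime_mul_left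
  have coprime : (24 * a).Coprime b :=
    ((hab.mul_left hab).mul_left hab).coprime_dvd_left ⟨9 * a ^ 2, by ring⟩
  obtain ⟨u, v, huv⟩ := Nat.isCoprime_iff_coprime.2 coprime
  have hu : IsCoprime u (b : ℤ) := ⟨(24 * a : ℕ), v, by rw [mul_comm, huv]⟩
  have isUnit_cast {x : ℤ} (hx : IsCoprime x (b : ℤ)) : IsUnit ((u * x : ℤ) : ZMod b) :=
    (ZMod.coe_int_isUnit_iff_isCoprime _ _).2 (hu.mul_left hx).symm
  have weights : ‖∑ ρ, klooWeight m n v a b ρ‖ ≤ (24 * a).totient := by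
    refine (norm_sum_le_of_le _ fun ρ _ ↦ norm_klooWeight_le m n v a b ρ).trans_eq ?_
    rw [sum_const, nsmul_one, card_univ, ZMod.card_units_eq_totient]
  have totient_pos : (0 : ℝ) < (24 * a * b).totient :=
    mod_cast Nat.totient_pos.2 (Nat.pos_of_ne_zero (NeZero.ne _))
  refine le_of_mul_le_mul_left ?_ totient_pos
  calc (24 * a * b).totient * ‖klooS m n (a * b)‖
      ≤ (a * b).totient * ((24 * a).totient * (√b * #b.divisors)) := by
        rw [totient_mul_norm_klooS m n b_odd coprime huv]
        gcongr
        exact norm_salieSum_le b_odd (isUnit_cast hn) (isUnit_cast hm)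
    _ = (24 * a * b).totient * (a.totient * (√b * #b.divisors)) := by
        rw [Nat.totient_mul coprime, Nat.totient_mul coprime_a]
        push_cast
        ring
    _ ≤ (24 * a * b).totient * (a * (√b * #b.divisors)) := by
        gcongr
        exact Nat.totient_le a

end KloostermanBound

section InvSqrt

/-- The arithmetic function `n ↦ n⁻¹ᐟ²`, in the domain of Dirichlet convolution. -/
noncomputable def invSqrt : ArithmeticFunction ℝ := ⟨fun n ↦ (√n)⁻¹, by simp⟩

theorem invSqrt_apply (n : ℕ) : invSqrt n = (√n)⁻¹ := rfl

theorem invSqrt_nonneg (n : ℕ) : 0 ≤ invSqrt n := inv_nonneg.2 (Real.sqrt_nonneg _)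

theorem invSqrt_mul (a b : ℕ) : invSqrt (a * b) = invSqrt a * invSqrt b := by
  rw [invSqrt_apply, Nat.cast_mul, Real.sqrt_mul (Nat.cast_nonneg a), mul_inv]
  rfl

theorem invSqrt_mul_self (n : ℕ) : invSqrt n * invSqrt n = (n : ℝ)⁻¹ := by
  rw [invSqrt_apply, ← mul_inv, Real.mul_self_sqrt n.cast_nonneg]

theorem invSqrt_mul_invSqrt_apply (n : ℕ) : (invSqrt * invSqrt) n = #n.divisors * (√n)⁻¹ := by
  calc (invSqrt * invSqrt) n
      = ∑ _x ∈ n.divisorsAntidiagonal, (√n)⁻¹ := by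
        rw [ArithmeticFunction.mul_apply]
        refine sum_congr rfl fun x hx ↦ ?_
        rw [← invSqrt_mul, (Nat.mem_divisorsAntidiagonal.1 hx).1, invSqrt_apply]
    _ = #n.divisors * (√n)⁻¹ := by
        rw [Nat.sum_divisorsAntidiagonal fun _ _ ↦ (√n)⁻¹, sum_const, nsmul_eq_mul]

theorem sum_Ioc_invSqrt_le (N : ℕ) : ∑ n ∈ Ioc 0 N, invSqrt n ≤ 2 * √N := by
  induction N with
  | zero => simp
  | succ N ih =>
    have sqrt_pos : 0 < √((N + 1 : ℕ) : ℝ) := Real.sqrt_pos.2 (mod_cast N.succ_pos)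
    have sq_succ : √((N + 1 : ℕ) : ℝ) ^ 2 = N + 1 := by
      rw [Real.sq_sqrt (Nat.cast_nonneg _), Nat.cast_succ]
    have sq_self : √(N : ℝ) ^ 2 = N := Real.sq_sqrt N.cast_nonneg
    have step : invSqrt (N + 1) ≤ 2 * (√((N + 1 : ℕ) : ℝ) - √N) := by
      rw [invSqrt_apply, inv_le_iff_one_le_mul₀ sqrt_pos]
      linarith [sq_nonneg (√((N + 1 : ℕ) : ℝ) - √N)]
    rw [sum_Ioc_succ_top N.zero_le]
    linarith

theorem sum_Ioc_mul_le {f g : ArithmeticFunction ℝ} (hf : ∀ n, 0 ≤ f n) {N : ℕ} {B : ℝ}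
    (hB : 0 ≤ B) (hg : ∀ M ≤ N, ∑ n ∈ Ioc 0 M, g n ≤ B * √M) :
    ∑ n ∈ Ioc 0 N, (f * g) n ≤ B * √N * ∑ n ∈ Ioc 0 N, f n * invSqrt n := by
  rw [ArithmeticFunction.sum_Ioc_mul_eq_sum_sum, mul_sum]
  refine sum_le_sum fun n _ ↦ ?_
  have sqrt_div : √((N / n : ℕ) : ℝ) ≤ √N * invSqrt n := by
    rw [invSqrt_apply, ← div_eq_mul_inv, ← Real.sqrt_div N.cast_nonneg]
    exact Real.sqrt_le_sqrt Nat.cast_div_le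
  calc f n * ∑ m ∈ Ioc 0 (N / n), g m
      ≤ f n * (B * (√N * invSqrt n)) := by
        refine mul_le_mul_of_nonneg_left ?_ (hf n)
        exact (hg _ (Nat.div_le_self N n)).trans (mul_le_mul_of_nonneg_left sqrt_div hB)
    _ = B * √N * (f n * invSqrt n) := by ring

theorem sum_Ioc_invSqrt_mul_invSqrt_le (N : ℕ) :
    ∑ n ∈ Ioc 0 N, (invSqrt * invSqrt) n ≤ 2 * (1 + Real.log N) * √N := by
  have harmonic_le : ∑ n ∈ Ioc 0 N, invSqrt n * invSqrt n ≤ 1 + Real.log N := by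
    simpa [invSqrt_mul_self, harmonic_eq_sum_Icc, ← Icc_add_one_left_eq_Ioc]
      using harmonic_le_one_add_log N
  calc ∑ n ∈ Ioc 0 N, (invSqrt * invSqrt) n
      ≤ 2 * √N * ∑ n ∈ Ioc 0 N, invSqrt n * invSqrt n :=
        sum_Ioc_mul_le invSqrt_nonneg zero_le_two fun M _ ↦ sum_Ioc_invSqrt_le M
    _ ≤ 2 * √N * (1 + Real.log N) := by gcongr
    _ = 2 * (1 + Real.log N) * √N := by ring

end InvSqrt

section FactoredNumbers

/-- The indicator function of the `s`-factored numbers, in the domain of Dirichlet convolution. -/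
noncomputable def factoredIndicator (s : Finset ℕ) : ArithmeticFunction ℝ :=
  ⟨(Nat.factoredNumbers s).indicator 1,
    Set.indicator_of_notMem (fun h ↦ Nat.ne_zero_of_mem_factoredNumbers h rfl) _⟩

theorem factoredIndicator_nonneg (s : Finset ℕ) (n : ℕ) : 0 ≤ factoredIndicator s n :=
  Set.indicator_nonneg (fun _ _ ↦ zero_le_one) n

theorem factoredIndicator_of_mem {s : Finset ℕ} {n : ℕ} (hn : n ∈ Nat.factoredNumbers s) :
    factoredIndicator s n = 1 :=
  Set.indicator_of_mem hn _

theorem invSqrt_le_of_two_le {n : ℕ} (hn : 2 ≤ n) : invSqrt n ≤ 3 / 4 := by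
  have two_le : (2 : ℝ) ≤ n := mod_cast hn
  have le_sqrt : 4 / 3 ≤ √(n : ℝ) := Real.le_sqrt_of_sq_le (by linarith)
  rw [invSqrt_apply, inv_le_comm₀ (by linarith) (by norm_num)]
  linarith

theorem sum_factoredIndicator_mul_invSqrt_le (s t : Finset ℕ) :
    ∑ n ∈ t, factoredIndicator s n * invSqrt n ≤ 4 ^ #s := by
  let f : ℕ →* ℝ := ⟨⟨invSqrt, by simp [invSqrt_apply]⟩, invSqrt_mul⟩
  have f_prime {p : ℕ} (hp : p.Prime) : f p ≤ 3 / 4 := invSqrt_le_of_two_le hp.two_le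
  have norm_lt {p : ℕ} (hp : p.Prime) : ‖f p‖ < 1 :=
    (Real.norm_of_nonneg (invSqrt_nonneg p)).trans_lt ((f_prime hp).trans_lt (by norm_num))
  have euler := (EulerProduct.summable_and_hasSum_factoredNumbers_prod_filter_prime_geometric
    norm_lt s).2
  have indicator_eq : (Nat.factoredNumbers s).indicator f =
      fun n ↦ factoredIndicator s n * invSqrt n := by
    ext n
    by_cases h : n ∈ Nat.factoredNumbers s <;> simp [factoredIndicator, f, h]
  have nonneg (n : ℕ) : 0 ≤ factoredIndicator s n * invSqrt n :=
    mul_nonneg (factoredIndicator_nonneg s n) (invSqrt_nonneg n)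
  rw [← Function.comp_def, hasSum_subtype_iff_indicator, indicator_eq] at euler
  calc ∑ n ∈ t, factoredIndicator s n * invSqrt n
      ≤ ∏ p ∈ s with p.Prime, (1 - f p)⁻¹ := sum_le_hasSum t (fun n _ ↦ nonneg n) euler
    _ ≤ ∏ p ∈ s with p.Prime, 4 := by
        refine prod_le_prod (fun p hp ↦ ?_) fun p hp ↦ ?_
        all_goals have := f_prime (mem_filter.1 hp).2
        · exact inv_nonneg.2 (by linarith)
        · exact inv_le_of_inv_le₀ (by norm_num) (by linarith)
    _ ≤ 4 ^ #s := by
        rw [prod_const]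
        exact pow_le_pow_right₀ (by norm_num) (card_filter_le _ _)

theorem exists_mul_eq_factored_coprime {Q c : ℕ} (hQ : Q ≠ 0) (hc : c ≠ 0) :
    ∃ a ∈ Nat.factoredNumbers Q.primeFactors, ∃ b, b.Coprime Q ∧ a * b = c := by
  induction c using induction_on_primes with
  | zero => exact absurd rfl hc
  | one => exact ⟨1, by simp [Nat.mem_factoredNumbers], 1, Nat.coprime_one_left Q, rfl⟩
  | prime_mul p c hp ih =>
    obtain ⟨a, ha, b, hb, rfl⟩ := ih (right_ne_zero_of_mul hc)
    by_cases hpQ : p ∣ Q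
    · have p_mem : p ∈ Nat.factoredNumbers Q.primeFactors := by
        simp [Nat.mem_factoredNumbers, Nat.primeFactorsList_prime hp, hp, hpQ, hQ, hp.ne_zero]
      exact ⟨p * a, Nat.mul_mem_factoredNumbers p_mem ha, b, hb, mul_assoc p a b⟩
    · exact ⟨a, ha, p * b, ((hp.coprime_iff_not_dvd).2 hpQ).mul_left hb, mul_left_comm a p b⟩

theorem coprime_of_mem_factoredNumbers {Q a b : ℕ} (ha : a ∈ Nat.factoredNumbers Q.primeFactors)
    (hb : b.Coprime Q) : a.Coprime b :=
  Nat.Coprime.symm <| Nat.coprime_of_dvd fun p hp hpb hpa ↦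
    hp.one_lt.ne' (Nat.dvd_one.1 (hb ▸ Nat.dvd_gcd hpb
      (Nat.dvd_of_mem_primeFactors (Nat.mem_factoredNumbers'.1 ha p hp hpa))))

theorem exists_pow_card_primeFactors_le {a ε : ℝ} (ha : 1 ≤ a) (hε : 0 < ε) :
    ∃ C : ℝ, 0 < C ∧ ∀ Q : ℕ, Q ≠ 0 → a ^ #Q.primeFactors ≤ C * Q ^ ε := by
  have a_pos : 0 < a := zero_lt_one.trans_le ha
  obtain ⟨P, hP⟩ := exists_nat_ge (a ^ ε⁻¹)
  refine ⟨a ^ P, by positivity, fun Q hQ ↦ ?_⟩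
  have le_of_prime {p : ℕ} (hp : p.Prime) : a ≤ (if p < P then a else 1) * (p : ℝ) ^ ε := by
    split_ifs with h
    · exact le_mul_of_one_le_right a_pos.le (Real.one_le_rpow (mod_cast hp.one_le) hε.le)
    · rw [one_mul]
      exact (Real.rpow_inv_le_iff_of_pos a_pos.le p.cast_nonneg hε).1
        (hP.trans (mod_cast not_lt.1 h))
  have card_le : #{p ∈ Q.primeFactors | p < P} ≤ P :=
    (card_le_card fun p hp ↦ mem_range.2 (mem_filter.1 hp).2).trans_eq (card_range P)
  calc a ^ #Q.primeFactors = ∏ _p ∈ Q.primeFactors, a := (prod_const a).symm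
    _ ≤ ∏ p ∈ Q.primeFactors, ((if p < P then a else 1) * (p : ℝ) ^ ε) :=
        prod_le_prod (fun _ _ ↦ a_pos.le) fun p hp ↦ le_of_prime (Nat.prime_of_mem_primeFactors hp)
    _ = a ^ #{p ∈ Q.primeFactors | p < P} * ((∏ p ∈ Q.primeFactors, p : ℕ) : ℝ) ^ ε := by
        rw [prod_mul_distrib, prod_ite, prod_const, prod_const_one, mul_one, Nat.cast_prod,
          Real.finsetProd_rpow _ _ fun _ _ ↦ Nat.cast_nonneg _]
    _ ≤ a ^ P * (Q : ℝ) ^ ε := by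
        gcongr
        exact Nat.le_of_dvd (Nat.pos_of_ne_zero hQ) (Nat.prod_primeFactors_dvd Q)

end FactoredNumbers

section Average

theorem norm_klooS_div_le (m n : ℤ) {Q c : ℕ} (hQ : Q ≠ 0) (h6 : 6 ∣ Q) (hm : 24 * m - 23 ∣ (Q : ℤ))
    (hn : 24 * n - 23 ∣ (Q : ℤ)) (hc : c ≠ 0) :
    ‖klooS m n c‖ / c ≤ (factoredIndicator Q.primeFactors * (invSqrt * invSqrt)) c := by
  obtain ⟨a, ha, b, hb, rfl⟩ := exists_mul_eq_factored_coprime hQ hc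
  have isCoprime_Q : IsCoprime (Q : ℤ) b := Nat.isCoprime_iff_coprime.2 hb.symm
  have coprime : (6 * a).Coprime b :=
    (hb.symm.coprime_dvd_left h6).mul_left (coprime_of_mem_factoredNumbers ha hb)
  have bound := norm_klooS_mul_le m n (left_ne_zero_of_mul hc) coprime
    (isCoprime_Q.of_isCoprime_of_dvd_left hm) (isCoprime_Q.of_isCoprime_of_dvd_left hn)
  have a_pos : (0 : ℝ) < a := mod_cast Nat.pos_of_ne_zero (left_ne_zero_of_mul hc)
  have sqrt_pos : 0 < √(b : ℝ) :=
    Real.sqrt_pos.2 (mod_cast Nat.pos_of_ne_zero (right_ne_zero_of_mul hc))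
  have nonneg (x : ℕ × ℕ) :
      0 ≤ factoredIndicator Q.primeFactors x.1 * (invSqrt * invSqrt) x.2 := by
    rw [invSqrt_mul_invSqrt_apply]
    exact mul_nonneg (factoredIndicator_nonneg _ _) (by positivity)
  calc ‖klooS m n (a * b)‖ / (a * b : ℕ)
      ≤ a * (√b * #b.divisors) / (a * b : ℕ) := by gcongr
    _ = factoredIndicator Q.primeFactors a * (invSqrt * invSqrt) b := by
        rw [factoredIndicator_of_mem ha, invSqrt_mul_invSqrt_apply, Nat.cast_mul]
        nth_rw 2 [← Real.mul_self_sqrt b.cast_nonneg]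
        field_simp
    _ ≤ (factoredIndicator Q.primeFactors * (invSqrt * invSqrt)) (a * b) := by
        rw [ArithmeticFunction.mul_apply]
        exact single_le_sum (f := fun x : ℕ × ℕ ↦
          factoredIndicator Q.primeFactors x.1 * (invSqrt * invSqrt) x.2) (fun x _ ↦ nonneg x)
          (Nat.mem_divisorsAntidiagonal.2 ⟨rfl, hc⟩ : (a, b) ∈ (a * b).divisorsAntidiagonal)

theorem sum_norm_klooS_div_le (m n : ℤ) {Q : ℕ} (hQ : Q ≠ 0) (h6 : 6 ∣ Q)
    (hm : 24 * m - 23 ∣ (Q : ℤ)) (hn : 24 * n - 23 ∣ (Q : ℤ)) (N : ℕ) :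
    ∑ c ∈ Icc 1 N, ‖klooS m n c‖ / c ≤
      2 * (1 + Real.log N) * √N * 4 ^ #Q.primeFactors := by
  have log_nonneg (M : ℕ) : 0 ≤ Real.log M := Real.log_natCast_nonneg M
  have divisor_sum_le : ∀ M ≤ N, ∑ k ∈ Ioc 0 M, (invSqrt * invSqrt) k ≤
      2 * (1 + Real.log N) * √M := fun M hM ↦ by
    refine (sum_Ioc_invSqrt_mul_invSqrt_le M).trans ?_
    rcases M.eq_zero_or_pos with rfl | hM0
    · simp
    · gcongr
  calc ∑ c ∈ Icc 1 N, ‖klooS m n c‖ / c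
      ≤ ∑ c ∈ Ioc 0 N, (factoredIndicator Q.primeFactors * (invSqrt * invSqrt)) c :=
        sum_le_sum fun c hc ↦
          norm_klooS_div_le m n hQ h6 hm hn (Nat.one_le_iff_ne_zero.1 (mem_Icc.1 hc).1)
    _ ≤ 2 * (1 + Real.log N) * √N *
          ∑ c ∈ Ioc 0 N, factoredIndicator Q.primeFactors c * invSqrt c :=
        sum_Ioc_mul_le (factoredIndicator_nonneg _) (by linarith [log_nonneg N]) divisor_sum_le
    _ ≤ 2 * (1 + Real.log N) * √N * 4 ^ #Q.primeFactors := by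
        have := log_nonneg N
        gcongr
        exact sum_factoredIndicator_mul_invSqrt_le _ _

theorem natAbs_twentyFour_mul_sub_le {k : ℤ} (hk : k ≠ 0) :
    ((24 * k - 23).natAbs : ℝ) ≤ 47 * |(k : ℝ)| := by
  have : (24 * k - 23).natAbs ≤ 47 * k.natAbs := by lia
  rw [← Int.cast_abs, ← Nat.cast_natAbs]
  exact mod_cast this

theorem exists_level (m n : ℤ) (hm : m ≠ 0) (hn : n ≠ 0) : ∃ Q : ℕ, Q ≠ 0 ∧ 6 ∣ Q ∧
    24 * m - 23 ∣ (Q : ℤ) ∧ 24 * n - 23 ∣ (Q : ℤ) ∧ (Q : ℝ) ≤ 13254 * |(m : ℝ) * n| := by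
  refine ⟨6 * ((24 * m - 23).natAbs * (24 * n - 23).natAbs), ?_, dvd_mul_right _ _, ?_, ?_, ?_⟩
  · simp only [ne_eq, mul_eq_zero, Int.natAbs_eq_zero]
    lia
  · exact Int.natAbs_dvd.1 (mod_cast (dvd_mul_right _ _).mul_left _)
  · exact Int.natAbs_dvd.1 (mod_cast (dvd_mul_left _ _).mul_left _)
  · rw [Nat.cast_mul, Nat.cast_mul, Nat.cast_ofNat]
    calc (6 : ℝ) * ((24 * m - 23).natAbs * (24 * n - 23).natAbs)
        ≤ 6 * (47 * |(m : ℝ)| * (47 * |(n : ℝ)|)) := by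
          gcongr
          exacts [natAbs_twentyFour_mul_sub_le hm, natAbs_twentyFour_mul_sub_le hn]
      _ = 13254 * |(m : ℝ) * n| := by
          rw [abs_mul]
          ring

end Average

theorem statement5 :
    ∀ ε : ℝ, 0 < ε → ∃ C : ℝ, 0 < C ∧
      ∀ m n : ℤ, m ≠ 0 → n ≠ 0 → ∀ X : ℝ, 2 ≤ X →
        ∑ c ∈ Finset.Icc 1 ⌊X⌋₊, ‖klooS m n c‖ / (c : ℝ) ≤
          C * X ^ ((1:ℝ)/2) * Real.log X * |(m : ℝ) * n| ^ ε := by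
  intro ε hε
  obtain ⟨C, hC, omega_le⟩ := exists_pow_card_primeFactors_le (a := 4) (by norm_num) hε
  refine ⟨6 * C * 13254 ^ ε, by positivity, fun m n hm hn X hX ↦ ?_⟩
  obtain ⟨Q, hQ, h6, hmQ, hnQ, Q_le⟩ := exists_level m n hm hn
  have log_le : 1 + Real.log ⌊X⌋₊ ≤ 3 * Real.log X := by
    have log_floor_le : Real.log ⌊X⌋₊ ≤ Real.log X :=
      Real.log_le_log (mod_cast Nat.floor_pos.2 (by linarith)) (Nat.floor_le (by linarith))
    linarith [Real.log_two_gt_d9, Real.log_le_log two_pos hX]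
  have log_nonneg := Real.log_nonneg (one_le_two.trans hX)
  calc ∑ c ∈ Icc 1 ⌊X⌋₊, ‖klooS m n c‖ / c
      ≤ 2 * (1 + Real.log ⌊X⌋₊) * √⌊X⌋₊ * 4 ^ #Q.primeFactors :=
        sum_norm_klooS_div_le m n hQ h6 hmQ hnQ _
    _ ≤ 2 * (3 * Real.log X) * √X * (C * (13254 * |(m : ℝ) * n|) ^ ε) := by
        gcongr
        · exact Nat.floor_le (by linarith)
        · exact (omega_le Q hQ).trans (by gcongr)
    _ = 6 * C * 13254 ^ ε * X ^ ((1 : ℝ) / 2) * Real.log X * |(m : ℝ) * n| ^ ε := by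
        rw [Real.sqrt_eq_rpow, Real.mul_rpow (by norm_num) (abs_nonneg _)]
        ring
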